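/- Let G be a group and X → G a function. The following are equivalent: (i) the induced homomorphism F → G is surjective but not injective (i.e. G is generated by the x_i but is not a free group freely generated by them); (ii) for every g ∈ G, all i, j ∈ {1,…,n} and all signs ε, ε' ∈ {±1}, there exists a nontrivial reduced word w in the alphabet X ∪ X⁻¹ whose first letter is different from x_j^{−ε'}, whose last letter is x_i^{ε}, and which satisfies w =_G g. -/

import Mathlib

/-- Words in the alphabet `X ∪ X⁻¹` with `X = {x_1, …, x_n}` are lists of letters `(i, b)`,
the letter `(i, b)` being `x_i` if `b = true` and `x_i⁻¹` if `b = false` (so the inverse of the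
letter `(i, b)` is `(i, !b)`).  `evalWord φ w` is the image of the word `w` in `G` under the
homomorphism `F(X) → G` induced by `φ : X → G`. -/
def evalWord {n : ℕ} {G : Type*} [Group G] (φ : Fin n → G) (w : List (Fin n × Bool)) : G :=
  FreeGroup.lift φ (FreeGroup.mk w)
/-! A conjugate `c r c⁻¹` of a nonempty reduced word `r` representing `1` again represents `1`, and
it is reduced as soon as the letter `c` avoids two letters depending on `r`. Two generators give
four letters, so such conjugations and products of their results yield words representing `1` with
arbitrary first and last letters; multiplying a reduced word by one of these on each side adjusts
its first and last letters without changing its value. -/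

/-- The formal inverse of a letter: `(i, b)` stands for `x_i` if `b = true` and for `x_i⁻¹` if
`b = false`. -/
def invLetter {α : Type*} (a : α × Bool) : α × Bool :=
  (a.1, !a.2)

/-- `HasReducedWord φ g a b` says that `g` is the value under `φ` of a (nonempty) reduced word with
first letter `a` and last letter `b`. -/
def HasReducedWord {α G : Type*} [Group G] (φ : α → G) (g : G) (a b : α × Bool) : Prop :=
  ∃ w : List (α × Bool), FreeGroup.IsReduced w ∧ w.head? = some a ∧ w.getLast? = some b ∧
    FreeGroup.lift φ (FreeGroup.mk w) = g

section Letters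

variable {α : Type*}

@[simp]
theorem invLetter_invLetter (a : α × Bool) : invLetter (invLetter a) = a := by
  simp [invLetter]

theorem ne_invLetter_iff {a b : α × Bool} : b ≠ invLetter a ↔ (a.1 = b.1 → a.2 = b.2) := by
  simp only [invLetter, ne_eq, Prod.ext_iff, not_and, Bool.not_eq_not, eq_comm]

theorem ne_invLetter_self (a : α × Bool) : a ≠ invLetter a := by
  simp [ne_invLetter_iff]

theorem exists_letter_ne_ne [Nontrivial α] (a b : α × Bool) : ∃ c, c ≠ a ∧ c ≠ b := by
  obtain ⟨k, hk⟩ := exists_ne a.1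
  exact ⟨(k, !b.2), ne_of_apply_ne Prod.fst hk, ne_of_apply_ne Prod.snd (Bool.not_ne_self b.2)⟩

theorem lift_mk_invLetter {G : Type*} [Group G] (φ : α → G) (a : α × Bool) :
    FreeGroup.lift φ (FreeGroup.mk [invLetter a]) = (FreeGroup.lift φ (FreeGroup.mk [a]))⁻¹ := by
  rw [← map_inv, FreeGroup.inv_mk]
  rfl

end Letters

namespace HasReducedWord

variable {α G : Type*} [Group G] {φ : α → G} {g g' : G} {a b c d : α × Bool}

theorem exists_of_isReduced {w : List (α × Bool)} (hw : FreeGroup.IsReduced w) (hne : w ≠ []) :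
    ∃ a b, HasReducedWord φ (FreeGroup.lift φ (FreeGroup.mk w)) a b :=
  ⟨w.head hne, w.getLast hne, w, hw, List.head?_eq_some_head hne,
    List.getLast?_eq_some_getLast hne, rfl⟩

theorem exists_lift_of_ne_one {f : FreeGroup α} (hf : f ≠ 1) :
    ∃ a b, HasReducedWord φ (FreeGroup.lift φ f) a b := by
  classical
  simpa only [FreeGroup.mk_toWord] using
    exists_of_isReduced (φ := φ) FreeGroup.isReduced_toWord (mt FreeGroup.toWord_eq_nil_iff.1 hf)

theorem singleton (a : α × Bool) :
    HasReducedWord φ (FreeGroup.lift φ (FreeGroup.mk [a])) a a :=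
  ⟨[a], FreeGroup.IsReduced.singleton, rfl, rfl, rfl⟩

theorem mul (hg : HasReducedWord φ g a b) (hg' : HasReducedWord φ g' c d) (hbc : c ≠ invLetter b) :
    HasReducedWord φ (g * g') a d := by
  obtain ⟨v, hv, hva, hvb, rfl⟩ := hg
  obtain ⟨w, hw, hwc, hwd, rfl⟩ := hg'
  refine ⟨v ++ w, List.isChain_append.2 ⟨hv, hw, ?_⟩, by simp [hva], by simp [hwd], ?_⟩
  · simpa [hvb, hwc] using ne_invLetter_iff.1 hbc
  · rw [← FreeGroup.mul_mk, map_mul]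

theorem one_conj (h : HasReducedWord φ 1 a b) (hca : c ≠ invLetter a) (hcb : c ≠ b) :
    HasReducedWord φ 1 c (invLetter c) := by
  have hac : a ≠ invLetter c := fun heq => hca (by simp [heq])
  have hbc : invLetter c ≠ invLetter b := fun heq => hcb (by simpa using congrArg invLetter heq)
  simpa only [lift_mk_invLetter, mul_one, mul_inv_cancel] using
    ((singleton c).mul h hac).mul (singleton (invLetter c)) hbc

variable [Nontrivial α]

theorem one_self_invLetter (h : HasReducedWord φ 1 a b) (c : α × Bool) :
    HasReducedWord φ 1 c (invLetter c) := by
  obtain ⟨d, hda, hdb⟩ := exists_letter_ne_ne (invLetter a) b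
  obtain ⟨e, hed, hec⟩ := exists_letter_ne_ne (invLetter d) (invLetter c)
  have hce : c ≠ invLetter e := fun heq => hec (by simp [heq])
  exact ((h.one_conj hda hdb).one_conj hed hed).one_conj hce hce

theorem one_of_one (h : HasReducedWord φ 1 a b) (c d : α × Bool) : HasReducedWord φ 1 c d := by
  obtain ⟨e, hec, hed⟩ := exists_letter_ne_ne c (invLetter d)
  have hce : HasReducedWord φ (1 * 1) c (invLetter e) :=
    (h.one_self_invLetter c).mul (h.one_self_invLetter e) (by simpa using hec)
  simpa using hce.mul (h.one_self_invLetter (invLetter d)) (by simpa using hed.symm)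

theorem change_ends (hg : HasReducedWord φ g a b) {p q : α × Bool} (h : HasReducedWord φ 1 p q)
    (c d : α × Bool) : HasReducedWord φ g c d := by
  simpa using ((h.one_of_one c a).mul hg (ne_invLetter_self a)).mul (h.one_of_one b d)
    (ne_invLetter_self b)

theorem of_mem_range (h : HasReducedWord φ 1 a b) (hg : g ∈ (FreeGroup.lift φ).range)
    (c d : α × Bool) : HasReducedWord φ g c d := by
  obtain ⟨f, rfl⟩ := hg
  obtain rfl | hf := eq_or_ne f 1
  · simpa using h.one_of_one c d
  · obtain ⟨s, t, hst⟩ := exists_lift_of_ne_one (φ := φ) hf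
    exact hst.change_ends h c d

end HasReducedWord

theorem not_injective_lift_iff {α G : Type*} [Group G] {φ : α → G} :
    ¬ Function.Injective (FreeGroup.lift φ) ↔ ∃ a b, HasReducedWord φ 1 a b := by
  classical
  rw [injective_iff_map_eq_one]
  push Not
  constructor
  · rintro ⟨r, hr, hr_ne⟩
    simpa only [hr] using HasReducedWord.exists_lift_of_ne_one (φ := φ) hr_ne
  · rintro ⟨a, b, w, hw, hwa, -, hw_one⟩
    refine ⟨FreeGroup.mk w, hw_one, fun h => ?_⟩
    have hw_nil : w = [] := by
      rw [← hw.reduce_eq, ← FreeGroup.toWord_mk, h, FreeGroup.toWord_one]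
    simp [hw_nil] at hwa

theorem irreducibility_iff_generated_not_freely_general
    {α G : Type*} [Nontrivial α] [Group G] (φ : α → G) :
    (Function.Surjective (FreeGroup.lift φ) ∧ ¬ Function.Injective (FreeGroup.lift φ)) ↔
    (∀ (g : G) (i j : α) (ε ε' : Bool),
      ∃ w : List (α × Bool), FreeGroup.IsReduced w ∧ w ≠ [] ∧
        w.head? ≠ some (j, !ε') ∧ w.getLast? = some (i, ε) ∧
        FreeGroup.lift φ (FreeGroup.mk w) = g) := by
  rw [not_injective_lift_iff]
  constructor
  · rintro ⟨hsurj, a, b, hab⟩ g i j ε ε'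
    obtain ⟨w, hw, hhead, hlast, hval⟩ := hab.of_mem_range (hsurj g) (j, ε') (i, ε)
    exact ⟨w, hw, fun h => by simp [h] at hhead, by simp [hhead], hlast, hval⟩
  · intro h
    obtain ⟨k⟩ : Nonempty α := inferInstance
    refine ⟨fun g => ?_, ?_⟩
    · obtain ⟨w, -, -, -, -, hw⟩ := h g k k true true
      exact ⟨_, hw⟩
    · obtain ⟨w, hred, hne, -, -, hw⟩ := h 1 k k true true
      exact hw ▸ HasReducedWord.exists_of_isReduced hred hne

/-- Let `G` be a group and `φ : X → G` a function.  The induced homomorphism `F(X) → G` is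
surjective but not injective (i.e. `G` is generated, but not freely generated, by the images of
the `x_i`) if and only if for every `g ∈ G`, all `i, j` and all signs `ε, ε'` there is a
nontrivial reduced word whose first letter differs from `x_j^{-ε'}`, whose last letter is
`x_i^{ε}`, and which evaluates to `g` in `G`. -/
theorem irreducibility_iff_generated_not_freely
    (n : ℕ) (hn : 2 ≤ n) (G : Type*) [Group G] (φ : Fin n → G) :
    (Function.Surjective (FreeGroup.lift φ) ∧ ¬ Function.Injective (FreeGroup.lift φ)) ↔
    (∀ (g : G) (i j : Fin n) (ε ε' : Bool),
      ∃ w : List (Fin n × Bool), FreeGroup.reduce w = w ∧ w ≠ [] ∧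
        w.head? ≠ some (j, !ε') ∧ w.getLast? = some (i, ε) ∧ evalWord φ w = g) := by
  have : Nontrivial (Fin n) := Fin.nontrivial_iff_two_le.2 hn
  simpa only [evalWord, FreeGroup.isReduced_iff_reduce_eq] using
    irreducibility_iff_generated_not_freely_general φ
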